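/- Let d ≥ 2 and let A be the d × d real matrix with A_{i,j} = sign(j − i) (i.e. 1 if i < j, −1 if i > j, 0 if i = j). Then the vectors A(e_i + e_{d+1−i}) for i = 1, …, ⌊d/2⌋ are linearly independent. Moreover rank A = 2⌊d/2⌋. -/

import Mathlib

/-- The matrix `sign (j - i)`. -/
def hypA (d : ℕ) : Matrix (Fin d) (Fin d) ℝ :=
  Matrix.of fun i j => if i < j then 1 else if j < i then -1 else 0

lemma hypA_step (d : ℕ) (v : Fin d → ℝ) (hv : (hypA d).mulVec v = 0) (k : ℕ) (hk : k + 1 < d) :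
    v ⟨k + 1, hk⟩ = - v ⟨k, by omega⟩ := by
  have h1 := congrFun hv ⟨k, by omega⟩
  have h2 := congrFun hv ⟨k + 1, hk⟩
  simp only [Matrix.mulVec, dotProduct, Pi.zero_apply] at h1 h2
  have h3 : ∑ j, (hypA d ⟨k, by omega⟩ j * v j - hypA d ⟨k + 1, hk⟩ j * v j)
      = ∑ j, ((if j = ⟨k, by omega⟩ then v j else 0) + (if j = ⟨k + 1, hk⟩ then v j else 0)) := by
    refine Finset.sum_congr rfl fun j _ => ?_
    obtain ⟨j, hj⟩ := j
    simp only [hypA, Matrix.of_apply, Fin.mk_lt_mk, Fin.mk.injEq]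
    split_ifs <;> first | omega | ring
  rw [Finset.sum_sub_distrib, h1, h2, Finset.sum_add_distrib] at h3
  simp at h3
  linarith

lemma hypA_alt (d : ℕ) (v : Fin d → ℝ) (hv : (hypA d).mulVec v = 0) (k : ℕ) (hk : k < d) :
    v ⟨k, hk⟩ = (-1) ^ k * v ⟨0, by omega⟩ := by
  induction k with
  | zero => simp
  | succ k ih => rw [hypA_step d v hv k hk, ih (by omega), pow_succ]; ring

lemma hypA_even (d : ℕ) (hd : 2 ≤ d) (he : Even d) (v : Fin d → ℝ)
    (hv : (hypA d).mulVec v = 0) : v ⟨0, by omega⟩ = 0 := by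
  have h1 := congrFun hv ⟨0, by omega⟩
  have h2 := congrFun hv ⟨d - 1, by omega⟩
  simp only [Matrix.mulVec, dotProduct, Pi.zero_apply] at h1 h2
  have h3 : ∑ j, (hypA d ⟨0, by omega⟩ j * v j + hypA d ⟨d - 1, by omega⟩ j * v j)
      = ∑ j, ((if j = ⟨d - 1, by omega⟩ then v j else 0)
        - (if j = ⟨0, by omega⟩ then v j else 0)) := by
    refine Finset.sum_congr rfl fun j _ => ?_
    obtain ⟨j, hj⟩ := j
    simp only [hypA, Matrix.of_apply, Fin.mk_lt_mk, Fin.mk.injEq]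
    split_ifs <;> first | omega | ring
  rw [Finset.sum_add_distrib, h1, h2, Finset.sum_sub_distrib] at h3
  simp at h3
  have h4 := hypA_alt d v hv (d - 1) (by omega)
  have : Odd (d - 1) := Nat.Even.sub_odd (by omega) he odd_one
  rw [this.neg_one_pow] at h4
  linarith

lemma hypA_rank (d : ℕ) (hd : 2 ≤ d) : (hypA d).rank = 2 * (d / 2) := by
  have hrn := LinearMap.finrank_range_add_finrank_ker (hypA d).mulVecLin
  rw [Module.finrank_fin_fun] at hrn
  change (hypA d).rank + _ = d at hrn
  rcases Nat.even_or_odd d with he | ho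
  · have : LinearMap.ker (hypA d).mulVecLin = ⊥ := by
      rw [LinearMap.ker_eq_bot']
      intro v hv
      have hv : (hypA d).mulVec v = 0 := hv
      funext ⟨k, hk⟩
      rw [hypA_alt d v hv k hk, hypA_even d hd he v hv]; simp
    rw [this, finrank_bot] at hrn
    have := Nat.two_mul_div_two_of_even he
    omega
  · have hle : Module.finrank ℝ (LinearMap.ker (hypA d).mulVecLin) ≤ 1 := by
      have := LinearMap.finrank_le_finrank_of_injective
        (f := (LinearMap.proj (⟨0, by omega⟩ : Fin d) : (Fin d → ℝ) →ₗ[ℝ] ℝ).comp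
          (LinearMap.ker (hypA d).mulVecLin).subtype) (by
          rw [← LinearMap.ker_eq_bot, LinearMap.ker_eq_bot']
          rintro ⟨v, hv⟩ h0
          have hv : (hypA d).mulVec v = 0 := hv
          have h0 : v ⟨0, by omega⟩ = 0 := h0
          ext ⟨k, hk⟩
          simp only
          rw [hypA_alt d v hv k hk, h0]; simp)
      simpa using this
    have hdet : (hypA d).det = 0 := by
      have hT : (hypA d).transpose = -hypA d := by
        ext ⟨i, hi⟩ ⟨j, hj⟩
        simp only [hypA, Matrix.transpose_apply, Matrix.neg_apply, Matrix.of_apply, Fin.mk_lt_mk]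
        split_ifs <;> first | omega | norm_num
      have := Matrix.det_transpose (hypA d)
      rw [hT, Matrix.det_neg, Fintype.card_fin, ho.neg_one_pow] at this
      linarith
    obtain ⟨v, hv0, hv⟩ := Matrix.exists_mulVec_eq_zero_iff.mpr hdet
    have hne : Module.finrank ℝ (LinearMap.ker (hypA d).mulVecLin) ≠ 0 := by
      intro h
      rw [Submodule.finrank_eq_zero] at h
      have : v ∈ LinearMap.ker (hypA d).mulVecLin := hv
      rw [h] at this
      exact hv0 (by simpa using this)
    have := Nat.two_mul_div_two_add_one_of_odd ho
    omega

/-- For the matrix `A` with `A i j = sign (j - i)` (the intersection matrix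
of the order-reversing permutation), the vectors `A(e_i + e_{d+1−i})`,
`i = 1,…,⌊d/2⌋`, are linearly independent, and `rank A = 2⌊d/2⌋`. -/
theorem hyperelliptic_transposition_lagrangian (d : ℕ) (hd : 2 ≤ d) :
    let A : Matrix (Fin d) (Fin d) ℝ :=
      Matrix.of fun i j => if i < j then 1 else if j < i then -1 else 0
    LinearIndependent ℝ (fun i : Fin (d / 2) =>
      A.mulVec (Pi.single ⟨i.val, lt_of_lt_of_le i.isLt (Nat.div_le_self d 2)⟩ (1 : ℝ) +
        Pi.single ⟨d - 1 - i.val, by omega⟩ (1 : ℝ)))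
    ∧ A.rank = 2 * (d / 2) := by
  intro A
  refine ⟨?_, hypA_rank d hd⟩
  let M : Matrix (Fin (d / 2)) (Fin (d / 2)) ℝ :=
    Matrix.of fun k i => if k < i then 2 else if k = i then 1 else 0
  have hM : IsUnit M := by
    rw [Matrix.isUnit_iff_isUnit_det, Matrix.det_of_upperTriangular]
    · simp [M]
    · intro i j hij
      have hij : j < i := hij
      simp [M, hij.not_gt, hij.ne']
  have hc : LinearIndependent ℝ M.col := Matrix.linearIndependent_cols_of_isUnit hM
  refine LinearIndependent.of_comp
    (LinearMap.funLeft ℝ ℝ (fun k : Fin (d / 2) =>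
      (⟨k.val, lt_of_lt_of_le k.isLt (Nat.div_le_self d 2)⟩ : Fin d))) ?_
  convert hc using 1
  funext ⟨i, hi⟩ ⟨k, hk⟩
  simp only [Function.comp, LinearMap.funLeft_apply, Matrix.mulVec_add, Pi.add_apply,
    Matrix.mulVec_single_one, Matrix.col_apply, A, M, Matrix.of_apply, Fin.mk_lt_mk, Fin.mk.injEq]
  split_ifs <;> first | omega | norm_num
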